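/- Let γ : ℝ → ℝ³ be a simple closed spherical curve of length L, parametrized by arclength, with curvature κ(s) = ‖γ''(s)‖, and let A be the area (2-dimensional Hausdorff measure) of one of the two connected components of the complement of the image of γ in the unit sphere S². If there exists a nonzero smooth function f : ℝ² → ℝ, 2π-periodic in t and L-periodic in s, with ∫₀^{2π} ∫₀^L [ (1 + A²/L²) (∂f/∂t)² + 4 (∂f/∂s)² + (4A/L) (∂f/∂t)(∂f/∂s) + κ(s)² f² ] ds dt = (4π²/L²) ∫₀^{2π} ∫₀^L f² ds dt (i.e., equality holds in the bound 4π²/L² ≤ μ₁(P_{A,L})), then the curvature κ is constant. -/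

import Mathlib

open Real MeasureTheory

/-- Wirtinger inequality with Dirichlet conditions. -/
lemma dirichlet_ineq (a L : ℝ) (hL : 0 < L) (y y' : ℝ → ℝ) (hy : ∀ s, HasDerivAt y (y' s) s)
    (hy' : Continuous y') (h0 : y a = 0) (h1 : y (a + L) = 0) :
    (π / L) ^ 2 * ∫ s in a..(a + L), y s ^ 2 ≤ ∫ s in a..(a + L), y' s ^ 2 := by
  have hyc : Continuous y := continuous_iff_continuousAt.2 fun s => (hy s).continuousAt
  have key : ∀ μ : ℝ, 0 < μ → μ < π / L →
      μ ^ 2 * ∫ s in a..(a + L), y s ^ 2 ≤ ∫ s in a..(a + L), y' s ^ 2 := by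
    intro μ hμ hμL
    have hμL' : μ * L < π := by rwa [lt_div_iff₀ hL] at hμL
    obtain ⟨δ, hδ⟩ : ∃ δ, δ = (π - μ * L) / 2 := ⟨_, rfl⟩
    have hδ0 : 0 < δ := by linarith
    have hsin : ∀ s ∈ Set.Icc a (a + L), 0 < sin (μ * (s - a) + δ) := by
      intro s hs
      have e1 : 0 ≤ μ * (s - a) := mul_nonneg hμ.le (by linarith [hs.1])
      have e2 : μ * (s - a) ≤ μ * L := mul_le_mul_of_nonneg_left (by linarith [hs.2]) hμ.le
      exact sin_pos_of_pos_of_lt_pi (by linarith) (by linarith)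
    set w : ℝ → ℝ := fun s => μ * (cos (μ * (s - a) + δ) / sin (μ * (s - a) + δ)) with hw
    have hwd : ∀ s ∈ Set.Icc a (a + L), HasDerivAt w (-μ ^ 2 - w s ^ 2) s := by
      intro s hs
      have hne := (hsin s hs).ne'
      have e : HasDerivAt (fun s => μ * (s - a) + δ) μ s := by
        simpa using (((hasDerivAt_id s).sub_const a).const_mul μ).add_const δ
      have := (e.cos.div e.sin hne).const_mul μ
      refine this.congr_deriv ?_
      simp only [hw]
      field_simp
    have hwc : ContinuousOn w (Set.Icc a (a + L)) := fun s hs =>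
      (hwd s hs).continuousAt.continuousWithinAt
    have hI : Set.uIcc a (a + L) = Set.Icc a (a + L) := Set.uIcc_of_le (by linarith)
    have hc : ContinuousOn (fun s => (-μ ^ 2 - w s ^ 2) * y s ^ 2 + w s * (2 * y s * y' s))
        (Set.Icc a (a + L)) := by fun_prop
    have hint : IntervalIntegrable
        (fun s => (-μ ^ 2 - w s ^ 2) * y s ^ 2 + w s * (2 * y s * y' s)) volume a (a + L) :=
      (hI ▸ hc).intervalIntegrable
    have ftc : ∫ s in a..(a + L), ((-μ ^ 2 - w s ^ 2) * y s ^ 2 + w s * (2 * y s * y' s)) = 0 := by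
      rw [intervalIntegral.integral_eq_sub_of_hasDerivAt (f := fun s => w s * y s ^ 2) _ hint]
      · simp [h0, h1]
      · intro s hs
        rw [hI] at hs
        refine ((hwd s hs).mul ((hy s).pow 2)).congr_deriv ?_
        simp
    have hm : ∫ s in a..(a + L), (((-μ ^ 2 - w s ^ 2) * y s ^ 2 + w s * (2 * y s * y' s))
        + μ ^ 2 * y s ^ 2) ≤ ∫ s in a..(a + L), y' s ^ 2 := by
      refine intervalIntegral.integral_mono_on (by linarith) (hint.add ?_) ?_ ?_
      · exact Continuous.intervalIntegrable (by fun_prop) _ _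
      · exact Continuous.intervalIntegrable (by fun_prop) _ _
      · intro s hs
        nlinarith [sq_nonneg (y' s - w s * y s)]
    rw [intervalIntegral.integral_add hint
      (Continuous.intervalIntegrable (by fun_prop) _ _), ftc,
      intervalIntegral.integral_const_mul, zero_add] at hm
    exact hm
  have hpos : 0 < π / L := div_pos pi_pos hL
  have ht : Filter.Tendsto (fun μ : ℝ => μ ^ 2 * ∫ s in a..(a + L), y s ^ 2)
      (nhdsWithin (π / L) (Set.Iio (π / L))) (nhds ((π / L) ^ 2 * ∫ s in a..(a + L), y s ^ 2)) :=
    (Continuous.tendsto (by fun_prop) _).mono_left nhdsWithin_le_nhds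
  refine le_of_tendsto ht ?_
  have : Set.Ioo 0 (π / L) ∈ nhdsWithin (π / L) (Set.Iio (π / L)) := Ioo_mem_nhdsLT hpos
  filter_upwards [this] with μ hμ
  exact key μ hμ.1 hμ.2

/-- Wirtinger inequality for antiperiodic functions. -/
lemma antiperiodic_ineq (L : ℝ) (hL : 0 < L) (y y' : ℝ → ℝ) (hy : ∀ s, HasDerivAt y (y' s) s)
    (hy' : Continuous y') (h0 : ∀ s, y (s + L) = - y s) :
    (π / L) ^ 2 * ∫ s in (0:ℝ)..L, y s ^ 2 ≤ ∫ s in (0:ℝ)..L, y' s ^ 2 := by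
  have hyc : Continuous y := continuous_iff_continuousAt.2 fun s => (hy s).continuousAt
  have h0' : ∀ s, y' (s + L) = - y' s := by
    intro s
    have e1 : HasDerivAt (fun s => y (s + L)) (y' (s + L)) s := (hy (s + L)).comp_add_const s L
    have e2 : HasDerivAt (fun s => y (s + L)) (- y' s) s := by
      have : (fun s => y (s + L)) = fun s => - y s := funext h0
      rw [this]; exact (hy s).neg
    exact e1.unique e2
  obtain ⟨a, ha⟩ : ∃ a, y a = 0 := by
    have h00 := h0 0
    rw [zero_add] at h00
    have := mem_range_of_exists_le_of_exists_ge (c := (0:ℝ)) hyc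
    rcases le_total (y 0) 0 with h | h
    · exact this ⟨0, h⟩ ⟨L, by linarith⟩
    · exact this ⟨L, by linarith⟩ ⟨0, h⟩
  have hd := dirichlet_ineq a L hL y y' hy hy' ha (by rw [h0, ha, neg_zero])
  have p1 : Function.Periodic (fun s => y s ^ 2) L := fun s => by simp [h0]
  have p2 : Function.Periodic (fun s => y' s ^ 2) L := fun s => by simp [h0']
  rw [p1.intervalIntegral_add_eq a 0, p2.intervalIntegral_add_eq a 0, zero_add] at hd
  exact hd

/-- Polar form: periodic radius, angle increasing by `π`. -/
lemma polar_ineq (L : ℝ) (hL : 0 < L) (r r' φ φ' : ℝ → ℝ) (hr : ∀ s, HasDerivAt r (r' s) s)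
    (hr' : Continuous r') (hφ : ∀ s, HasDerivAt φ (φ' s) s) (hφ' : Continuous φ')
    (hrL : ∀ s, r (s + L) = r s) (hφL : ∀ s, φ (s + L) = φ s + π) :
    (π / L) ^ 2 * ∫ s in (0:ℝ)..L, r s ^ 2 ≤ ∫ s in (0:ℝ)..L, (r' s ^ 2 + φ' s ^ 2 * r s ^ 2) := by
  have hrc : Continuous r := continuous_iff_continuousAt.2 fun s => (hr s).continuousAt
  have hφc : Continuous φ := continuous_iff_continuousAt.2 fun s => (hφ s).continuousAt
  have A1 := antiperiodic_ineq L hL (fun s => r s * cos (φ s))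
    (fun s => r' s * cos (φ s) + r s * (- sin (φ s) * φ' s))
    (fun s => (hr s).mul (hφ s).cos) (by fun_prop) (fun s => by simp [hrL, hφL, cos_add_pi])
  have A2 := antiperiodic_ineq L hL (fun s => r s * sin (φ s))
    (fun s => r' s * sin (φ s) + r s * (cos (φ s) * φ' s))
    (fun s => (hr s).mul (hφ s).sin) (by fun_prop) (fun s => by simp [hrL, hφL, sin_add_pi])
  have A := add_le_add A1 A2
  rw [← mul_add, ← intervalIntegral.integral_add, ← intervalIntegral.integral_add] at A
  · have e1 : ∀ s, (r s * cos (φ s)) ^ 2 + (r s * sin (φ s)) ^ 2 = r s ^ 2 := fun s => by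
      linear_combination (r s) ^ 2 * (sin_sq_add_cos_sq (φ s))
    have e2 : ∀ s, (r' s * cos (φ s) + r s * (- sin (φ s) * φ' s)) ^ 2
        + (r' s * sin (φ s) + r s * (cos (φ s) * φ' s)) ^ 2 = r' s ^ 2 + φ' s ^ 2 * r s ^ 2 :=
      fun s => by
        linear_combination (r' s ^ 2 + φ' s ^ 2 * r s ^ 2) * (sin_sq_add_cos_sq (φ s))
    simpa only [e1, e2] using A
  all_goals exact Continuous.intervalIntegrable (by fun_prop) _ _

/-- On the sphere, the angle is at most the length. -/
lemma arc_lemma {E : Type*} [NormedAddCommGroup E] [InnerProductSpace ℝ E]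
    (T T' : ℝ → E) (κ K : ℝ → ℝ) (hT : ∀ s, HasDerivAt T (T' s) s)
    (h1 : ∀ s, ‖T s‖ = 1) (hκ : ∀ s, κ s = ‖T' s‖) (hK : ∀ s, HasDerivAt K (κ s) s)
    (a b : ℝ) (hab : a ≤ b) (hπ : K b - K a ≤ π) :
    cos (K b - K a) ≤ inner ℝ (T a) (T b) := by
  have horth : ∀ s, inner ℝ (T s) (T' s) = 0 := by
    intro s
    have e1 := (hT s).inner ℝ (hT s)
    have e2 : (fun t => inner ℝ (T t) (T t)) = fun _ => (1:ℝ) := by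
      funext t; rw [real_inner_self_eq_norm_sq, h1]; norm_num
    rw [e2] at e1
    have := e1.unique (hasDerivAt_const s (1:ℝ))
    rw [real_inner_comm (T s) (T' s)] at this
    linarith [this, real_inner_comm (T s) (T' s)]
  obtain ⟨φ, hφ⟩ : ∃ φ : ℝ → ℝ, φ = fun s => inner ℝ (T a) (T s) := ⟨_, rfl⟩
  have hφ1 : ∀ s, φ s ^ 2 ≤ 1 := by
    intro s
    have := abs_real_inner_le_norm (T a) (T s)
    rw [h1, h1] at this
    rw [hφ]
    exact (sq_le_one_iff_abs_le_one _).2 (by linarith)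
  have hφd : ∀ s, HasDerivAt φ (inner ℝ (T a) (T' s)) s := by
    intro s
    rw [hφ]
    simpa using (hasDerivAt_const s (T a)).inner ℝ (hT s)
  have hφb : ∀ s, (inner ℝ (T a) (T' s)) ^ 2 ≤ (1 - φ s ^ 2) * κ s ^ 2 := by
    intro s
    have e1 : inner ℝ (T a - φ s • T s) (T' s) = inner ℝ (T a) (T' s) := by
      rw [inner_sub_left, inner_smul_left, horth]; simp
    have e2 : ‖T a - φ s • T s‖ ^ 2 = 1 - φ s ^ 2 := by
      rw [norm_sub_sq_real, inner_smul_right, norm_smul, h1, h1, mul_one, norm_eq_abs, sq_abs, hφ]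
      ring
    have e3 := abs_real_inner_le_norm (T a - φ s • T s) (T' s)
    rw [e1] at e3
    rw [← e2, hκ, ← mul_pow]
    exact sq_le_sq' (by linarith [neg_abs_le (inner ℝ (T a) (T' s))]) ((le_abs_self _).trans e3)
  have hκ0 : ∀ s, 0 ≤ κ s := fun s => by rw [hκ]; exact norm_nonneg _
  have key : ∀ l : ℝ, 0 < l → l < 1 → arccos (l * φ b) ≤ arccos (l * φ a) + (K b - K a) := by
    intro l hl0 hl1
    have hlt : ∀ s, (l * φ s) ^ 2 < 1 := by
      intro s
      have : l ^ 2 < 1 := by nlinarith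
      rw [mul_pow]
      nlinarith [hφ1 s, sq_nonneg (φ s), sq_nonneg l]
    have hd : ∀ s, HasDerivAt (fun s => arccos (l * φ s) - K s)
        (-(1 / √(1 - (l * φ s) ^ 2)) * (l * inner ℝ (T a) (T' s)) - κ s) s := by
      intro s
      refine HasDerivAt.sub ?_ (hK s)
      refine HasDerivAt.comp (h₂ := arccos) s (hasDerivAt_arccos ?_ ?_) ((hφd s).const_mul l)
      · intro h; have := hlt s; rw [h] at this; norm_num at this
      · intro h; have := hlt s; rw [h] at this; norm_num at this
    have hanti := antitone_of_hasDerivAt_nonpos hd (by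
      intro s
      have hp : 0 < √(1 - (l * φ s) ^ 2) := sqrt_pos.2 (by linarith [hlt s])
      have : |l * inner ℝ (T a) (T' s)| ≤ κ s * √(1 - (l * φ s) ^ 2) := by
        apply abs_le_of_sq_le_sq _ (mul_nonneg (hκ0 s) hp.le)
        rw [mul_pow, mul_pow, sq_sqrt (by linarith [hlt s])]
        have q1 : l ^ 2 * (inner ℝ (T a) (T' s)) ^ 2 ≤ l ^ 2 * ((1 - φ s ^ 2) * κ s ^ 2) :=
          mul_le_mul_of_nonneg_left (hφb s) (sq_nonneg l)
        have q2 : l ^ 2 ≤ 1 := by nlinarith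
        nlinarith [mul_nonneg (sub_nonneg.2 q2) (sq_nonneg (κ s))]
      have h2 : -(l * inner ℝ (T a) (T' s)) ≤ κ s * √(1 - (l * φ s) ^ 2) :=
        (neg_le_abs _).trans this
      have h3 : -(l * inner ℝ (T a) (T' s)) / √(1 - (l * φ s) ^ 2) ≤ κ s := by
        rwa [div_le_iff₀ hp]
      have h4 : -(1 / √(1 - (l * φ s) ^ 2)) * (l * inner ℝ (T a) (T' s))
          = -(l * inner ℝ (T a) (T' s)) / √(1 - (l * φ s) ^ 2) := by ring
      simp only [Pi.zero_apply]
      rw [h4]; linarith)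
    have := hanti hab
    simp only at this
    linarith
  have hlim : arccos (φ b) ≤ arccos (φ a) + (K b - K a) := by
    have t1 : Filter.Tendsto (fun l : ℝ => arccos (l * φ b)) (nhdsWithin 1 (Set.Iio 1))
        (nhds (arccos (1 * φ b))) :=
      (Continuous.tendsto (continuous_arccos.comp (by fun_prop)) _).mono_left nhdsWithin_le_nhds
    have t2 : Filter.Tendsto (fun l : ℝ => arccos (l * φ a) + (K b - K a))
        (nhdsWithin 1 (Set.Iio 1)) (nhds (arccos (1 * φ a) + (K b - K a))) :=
      (Continuous.tendsto ((continuous_arccos.comp (by fun_prop)).add continuous_const)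
        _).mono_left nhdsWithin_le_nhds
    rw [one_mul] at t1 t2
    refine le_of_tendsto_of_tendsto t1 t2 ?_
    have : Set.Ioo (0:ℝ) 1 ∈ nhdsWithin (1:ℝ) (Set.Iio 1) := Ioo_mem_nhdsLT one_pos
    filter_upwards [this] with l hl
    exact key l hl.1 hl.2
  have hφa : φ a = 1 := by rw [hφ]; simp [h1]
  rw [hφa, arccos_one, zero_add] at hlim
  have hb := (sq_le_one_iff_abs_le_one _).1 (hφ1 b)
  have := cos_le_cos_of_nonneg_of_le_pi (arccos_nonneg _) hπ hlim
  rw [cos_arccos (abs_le.1 hb).1 (abs_le.1 hb).2, hφ] at this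
  exact this

/-- Equality on an arc forces constant curvature on it. -/
lemma rigid_arc {E : Type*} [NormedAddCommGroup E] [InnerProductSpace ℝ E]
    (γ T T' : ℝ → E) (κ K : ℝ → ℝ) (hγ : ∀ s, HasDerivAt γ (T s) s)
    (hT : ∀ s, HasDerivAt T (T' s) s)
    (h1 : ∀ s, ‖T s‖ = 1) (hκ : ∀ s, κ s = ‖T' s‖) (hκ1 : ∀ s, 1 ≤ κ s)
    (hκc : Continuous κ) (hK : ∀ s, HasDerivAt K (κ s) s) (horth : ∀ s, inner ℝ (T s) (T' s) = 0)
    (hγT : ∀ s, inner ℝ (γ s) (T s) = 0) (hγT' : ∀ s, inner ℝ (γ s) (T' s) = -1)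
    (a b : ℝ) (hπ : K b - K a ≤ π)
    (hcos : ∀ s ∈ Set.Icc a b, inner ℝ (T a) (T s) = cos (K s - K a)) :
    ∀ s ∈ Set.Icc a b, κ s = κ a := by
  have hKm : StrictMono K := strictMono_of_hasDerivAt_pos hK (fun s => by linarith [hκ1 s])
  obtain ⟨m, hm⟩ : ∃ m : ℝ → ℝ, m = fun s => inner ℝ (T a) (γ s) := ⟨_, rfl⟩
  have hmd : ∀ s, HasDerivAt m (inner ℝ (T a) (T s)) s := by
    intro s
    rw [hm]
    simpa using (hasDerivAt_const s (T a)).inner ℝ (hγ s)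
  have hsin : ∀ s ∈ Set.Ioo a b, 0 < sin (K s - K a) := by
    intro s hs
    exact sin_pos_of_pos_of_lt_pi (by linarith [hKm hs.1]) (by linarith [hKm hs.2])
  have hKa : ∀ s, HasDerivAt (fun s => K s - K a) (κ s) s := fun s => (hK s).sub_const _
  have hpT' : ∀ s ∈ Set.Ioo a b, inner ℝ (T a) (T' s) = - sin (K s - K a) * κ s := by
    intro s hs
    have e1 : HasDerivAt (fun s => inner ℝ (T a) (T s)) (inner ℝ (T a) (T' s)) s := by
      simpa using (hasDerivAt_const s (T a)).inner ℝ (hT s)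
    have e2 := (hKa s).cos
    refine e1.unique (e2.congr_of_eventuallyEq ?_)
    filter_upwards [Ioo_mem_nhds hs.1 hs.2] with u hu
    exact hcos u ⟨hu.1.le, hu.2.le⟩
  have hmκ : ∀ s ∈ Set.Ioo a b, m s * κ s = sin (K s - K a) := by
    intro s hs
    have hk : 0 < κ s := by linarith [hκ1 s]
    set c := cos (K s - K a) with hc
    set d := sin (K s - K a) with hd
    have hcd : d ^ 2 + c ^ 2 = 1 := sin_sq_add_cos_sq _
    have h2 := hcos s ⟨hs.1.le, hs.2.le⟩
    have h3 := hpT' s hs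
    have z : T a - (c • T s - (d / κ s) • T' s) = 0 := by
      rw [← norm_eq_zero, ← sq_eq_zero_iff, norm_sub_sq_real, norm_sub_sq_real]
      simp only [inner_sub_right, inner_smul_left, inner_smul_right, norm_smul, h1, h2, h3, horth,
        ← hκ, norm_eq_abs, mul_pow, sq_abs, ← hc, ← hd]
      simp
      field_simp
      linear_combination - hcd
    have z' : T a = c • T s - (d / κ s) • T' s := sub_eq_zero.1 z
    have : m s = d / κ s := by
      rw [hm]
      simp only
      rw [z', inner_sub_left, inner_smul_left, inner_smul_left, real_inner_comm (γ s) (T s),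
        real_inner_comm (γ s) (T' s), hγT, hγT']
      simp
    rw [this]; field_simp
  have hκd : ∀ s ∈ Set.Ioo a b, HasDerivAt κ 0 s := by
    intro s hs
    have hmpos : ∀ u ∈ Set.Ioo a b, m u ≠ 0 := by
      intro u hu h
      have := hmκ u hu
      rw [h, zero_mul] at this
      exact (hsin u hu).ne this
    have e := (hKa s).sin.div (hmd s) (hmpos s hs)
    have e' := e.congr_of_eventuallyEq (f₁ := κ) (by
      filter_upwards [Ioo_mem_nhds hs.1 hs.2] with u hu
      simp only [Pi.div_apply]
      rw [eq_div_iff (hmpos u hu), ← hmκ u hu, mul_comm])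
    refine e'.congr_deriv ?_
    rw [hcos s ⟨hs.1.le, hs.2.le⟩, ← hmκ s hs]
    have := hmpos s hs
    field_simp
    ring
  intro s hs
  rcases hs.1.eq_or_lt with h | h
  · rw [h]
  · obtain ⟨c, hc, hc2⟩ := exists_hasDerivAt_eq_slope κ (fun _ => 0) h hκc.continuousOn
      (fun u hu => hκd u ⟨hu.1, hu.2.trans_le hs.2⟩)
    have : s - a ≠ 0 := by linarith
    field_simp at hc2
    linarith

/-- Fenchel with rigidity: total curvature at most `2π` forces constant curvature. -/
lemma fenchel_rigid {E : Type*} [NormedAddCommGroup E] [InnerProductSpace ℝ E]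
    (L : ℝ) (hL : 0 < L)
    (γ T T' : ℝ → E) (κ K : ℝ → ℝ) (hγ : ∀ s, HasDerivAt γ (T s) s)
    (hT : ∀ s, HasDerivAt T (T' s) s)
    (h1 : ∀ s, ‖T s‖ = 1) (hκ : ∀ s, κ s = ‖T' s‖) (hκ1 : ∀ s, 1 ≤ κ s)
    (hκc : Continuous κ) (hK : ∀ s, HasDerivAt K (κ s) s) (horth : ∀ s, inner ℝ (T s) (T' s) = 0)
    (hγT : ∀ s, inner ℝ (γ s) (T s) = 0) (hγT' : ∀ s, inner ℝ (γ s) (T' s) = -1)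
    (hγL : γ L = γ 0) (hTL : T L = T 0) (hK2 : K L - K 0 ≤ 2 * π) :
    ∀ s ∈ Set.Icc 0 L, κ s = κ 0 := by
  have hKm : StrictMono K := strictMono_of_hasDerivAt_pos hK (fun s => by linarith [hκ1 s])
  have hKc : Continuous K := continuous_iff_continuousAt.2 fun s => (hK s).continuousAt
  have hTc : Continuous T := continuous_iff_continuousAt.2 fun s => (hT s).continuousAt
  have hK0L := hKm hL
  obtain ⟨h, hh, hKh⟩ : ∃ h ∈ Set.Icc 0 L, K h = (K 0 + K L) / 2 :=
    intermediate_value_Icc hL.le hKc.continuousOn ⟨by linarith, by linarith⟩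
  have arc := arc_lemma T T' κ K hT h1 hκ hK
  have fst : ∀ s ∈ Set.Icc 0 h, cos (K s - K 0) ≤ inner ℝ (T 0) (T s) ∧
      - cos (K s - K 0) ≤ inner ℝ (T h) (T s) := by
    intro s hs
    have m1 := hKm.monotone hs.1
    have m2 := hKm.monotone hs.2
    refine ⟨arc 0 s hs.1 (by linarith), ?_⟩
    have q := arc s h hs.2 (by linarith)
    rw [real_inner_comm] at q
    refine le_trans ?_ q
    rw [← cos_pi_sub]
    exact cos_le_cos_of_nonneg_of_le_pi (by linarith) (by linarith) (by linarith)
  have snd : ∀ s ∈ Set.Icc h L, cos (K s - K h) ≤ inner ℝ (T h) (T s) ∧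
      - cos (K s - K h) ≤ inner ℝ (T 0) (T s) := by
    intro s hs
    have m1 := hKm.monotone hs.1
    have m2 := hKm.monotone hs.2
    refine ⟨arc h s hs.1 (by linarith), ?_⟩
    have q := arc s L hs.2 (by linarith)
    rw [real_inner_comm, hTL] at q
    refine le_trans ?_ q
    rw [← cos_pi_sub]
    exact cos_le_cos_of_nonneg_of_le_pi (by linarith) (by linarith) (by linarith)
  have hnn : ∀ s ∈ Set.Icc 0 L, 0 ≤ inner ℝ (T 0 + T h) (T s) := by
    intro s hs
    rw [inner_add_left]
    rcases le_total s h with hsh | hsh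
    · linarith [(fst s ⟨hs.1, hsh⟩).1, (fst s ⟨hs.1, hsh⟩).2]
    · linarith [(snd s ⟨hsh, hs.2⟩).1, (snd s ⟨hsh, hs.2⟩).2]
  have hc : Continuous fun s => inner ℝ (T 0 + T h) (T s) := by fun_prop
  have hint : ∫ s in (0:ℝ)..L, inner ℝ (T 0 + T h) (T s) = 0 := by
    rw [intervalIntegral.integral_eq_sub_of_hasDerivAt (f := fun s => inner ℝ (T 0 + T h) (γ s)) _
      (hc.intervalIntegrable _ _)]
    · simp [hγL]
    · intro s _
      simpa using (hasDerivAt_const s (T 0 + T h)).inner ℝ (hγ s)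
  have hz : ∀ s ∈ Set.Icc 0 L, inner ℝ (T 0) (T s) + inner ℝ (T h) (T s) = 0 := by
    intro s hs
    rw [← inner_add_left]
    by_contra hne
    have := intervalIntegral.integral_pos hL hc.continuousOn
      (fun x hx => hnn x ⟨hx.1.le, hx.2⟩) ⟨s, hs, lt_of_le_of_ne (hnn s hs) (Ne.symm hne)⟩
    rw [hint] at this
    exact lt_irrefl _ this
  have r1 := rigid_arc γ T T' κ K hγ hT h1 hκ hκ1 hκc hK horth hγT hγT' 0 h (by linarith)
    (fun s hs => by
      have := fst s hs
      linarith [hz s ⟨hs.1, hs.2.trans hh.2⟩])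
  have r2 := rigid_arc γ T T' κ K hγ hT h1 hκ hκ1 hκc hK horth hγT hγT' h L (by linarith)
    (fun s hs => by
      have := snd s hs
      linarith [hz s ⟨hh.1.trans hs.1, hs.2⟩])
  intro s hs
  rcases le_total s h with hsh | hsh
  · exact r1 s ⟨hs.1, hsh⟩
  · rw [r2 s ⟨hsh, hs.2⟩, r1 h ⟨hh.1, le_rfl⟩]

/-- Swapping interval integrals of continuous functions. -/
lemma swap_cont (g : ℝ → ℝ → ℝ) (hg : Continuous (Function.uncurry g)) (a b c d : ℝ)
    (hcd : c ≤ d) :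
    ∫ x in a..b, ∫ y in c..d, g x y = ∫ y in c..d, ∫ x in a..b, g x y := by
  simp only [intervalIntegral.integral_of_le hcd]
  apply intervalIntegral_integral_swap
  rw [Measure.prod_restrict]
  have : IntegrableOn (Function.uncurry g) (Set.uIcc a b ×ˢ Set.Icc c d)
      ((volume : Measure ℝ).prod volume) :=
    hg.continuousOn.integrableOn_compact (isCompact_uIcc.prod isCompact_Icc)
  exact this.mono_set (Set.prod_mono Set.uIoc_subset_uIcc Set.Ioc_subset_Icc_self)

lemma sqrt_ineq (L : ℝ) (hL : 0 < L) (P Q M κ K : ℝ → ℝ) (Θ : ℝ) (hΘ : 2 * π < Θ)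
    (hP : ∀ s, HasDerivAt P (Q s) s) (hQc : Continuous Q) (hMc : Continuous M) (hP0 : ∀ s, 0 ≤ P s)
    (hPL : ∀ s, P (s + L) = P s) (hκc : Continuous κ) (hK : ∀ s, HasDerivAt K (κ s) s)
    (hKL : ∀ s, K (s + L) = K s + Θ)
    (hq : ∀ s l : ℝ, 0 ≤ M s - l * Q s + l ^ 2 * P s) :
    4 * (π / L) ^ 2 * ∫ s in (0:ℝ)..L, P s ≤
      ∫ s in (0:ℝ)..L, (4 * M s + (2 * π / Θ) ^ 2 * κ s ^ 2 * P s) := by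
  have hPc : Continuous P := continuous_iff_continuousAt.2 fun s => (hP s).continuousAt
  have hΘ0 : 0 < Θ := by linarith [pi_pos]
  set c := 2 * π / Θ with hc
  have key : ∀ ε : ℝ, 0 < ε → 4 * (π / L) ^ 2 * (∫ s in (0:ℝ)..L, P s) ≤
      (∫ s in (0:ℝ)..L, (4 * M s + c ^ 2 * κ s ^ 2 * P s))
        + ε * ∫ s in (0:ℝ)..L, c ^ 2 * κ s ^ 2 := by
    intro ε hε
    have hpos : ∀ s, 0 < P s + ε := fun s => by linarith [hP0 s]
    have hsq : ∀ s, √(P s + ε) ^ 2 = P s + ε := fun s => sq_sqrt (hpos s).le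
    have hne : ∀ s, 2 * √(P s + ε) ≠ 0 := fun s =>
      mul_ne_zero two_ne_zero (sqrt_pos.2 (hpos s)).ne'
    have A := polar_ineq L hL (fun s => √(P s + ε)) (fun s => Q s / (2 * √(P s + ε)))
      (fun s => c / 2 * K s) (fun s => c / 2 * κ s)
      (fun s => ((hP s).add_const ε).sqrt (hpos s).ne')
      (hQc.div (by fun_prop) hne) (fun s => (hK s).const_mul _) (by fun_prop)
      (fun s => by simp only [hPL]) (fun s => by
        rw [hKL, hc]; field_simp)
    simp only [hsq] at A
    have B : ∫ s in (0:ℝ)..L, 4 * ((Q s / (2 * √(P s + ε))) ^ 2 + (c / 2 * κ s) ^ 2 * (P s + ε)) ≤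
        ∫ s in (0:ℝ)..L, ((4 * M s + c ^ 2 * κ s ^ 2 * P s) + ε * (c ^ 2 * κ s ^ 2)) := by
      refine intervalIntegral.integral_mono_on hL.le ?_ ?_ ?_
      · refine Continuous.intervalIntegrable ?_ _ _
        have : Continuous fun s => Q s / (2 * √(P s + ε)) := hQc.div (by fun_prop) hne
        fun_prop
      · exact Continuous.intervalIntegrable (by fun_prop) _ _
      · intro s _
        have h1 : (Q s / (2 * √(P s + ε))) ^ 2 = Q s ^ 2 / (4 * (P s + ε)) := by
          rw [div_pow, mul_pow, hsq]; norm_num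
        have h2 := hq s (Q s / (2 * (P s + ε)))
        have h3 : Q s ^ 2 / (4 * (P s + ε)) ≤ M s := by
          have hp := hpos s
          have e : M s - Q s / (2 * (P s + ε)) * Q s + (Q s / (2 * (P s + ε))) ^ 2 * P s
            = M s - Q s ^ 2 / (4 * (P s + ε)) - ε * (Q s / (2 * (P s + ε))) ^ 2 := by
            field_simp
            ring
          rw [e] at h2
          nlinarith [mul_nonneg hε.le (sq_nonneg (Q s / (2 * (P s + ε))))]
        rw [h1]
        nlinarith
    rw [intervalIntegral.integral_const_mul,
      intervalIntegral.integral_add (f := fun s => 4 * M s + c ^ 2 * κ s ^ 2 * P s)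
        (g := fun s => ε * (c ^ 2 * κ s ^ 2)),
      intervalIntegral.integral_const_mul (r := ε)] at B
    · have C : ∫ s in (0:ℝ)..L, P s ≤ ∫ s in (0:ℝ)..L, (P s + ε) :=
        intervalIntegral.integral_mono_on hL.le (hPc.intervalIntegrable _ _)
          (Continuous.intervalIntegrable (by fun_prop) _ _) (fun s _ => by linarith)
      have := mul_le_mul_of_nonneg_left C (by positivity : 0 ≤ 4 * (π / L) ^ 2)
      linarith
    all_goals exact Continuous.intervalIntegrable (by fun_prop) _ _
  have ht : Filter.Tendsto (fun ε : ℝ => (∫ s in (0:ℝ)..L, (4 * M s + c ^ 2 * κ s ^ 2 * P s))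
        + ε * ∫ s in (0:ℝ)..L, c ^ 2 * κ s ^ 2) (nhdsWithin 0 (Set.Ioi 0))
      (nhds ((∫ s in (0:ℝ)..L, (4 * M s + c ^ 2 * κ s ^ 2 * P s))
        + 0 * ∫ s in (0:ℝ)..L, c ^ 2 * κ s ^ 2)) :=
    (Continuous.tendsto (by fun_prop) _).mono_left nhdsWithin_le_nhds
  rw [zero_mul, add_zero] at ht
  refine ge_of_tendsto ht ?_
  filter_upwards [self_mem_nhdsWithin] with ε hε
  exact key ε hε

lemma energy_contra (L : ℝ) (hL : 0 < L) (A : ℝ) (f ft fs : ℝ → ℝ → ℝ) (κ K : ℝ → ℝ) (Θ : ℝ)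
    (hΘ : 2 * π < Θ) (hf : Continuous (Function.uncurry f))
    (hft : Continuous (Function.uncurry ft)) (hfs : Continuous (Function.uncurry fs))
    (hdt : ∀ t s, HasDerivAt (fun t' => f t' s) (ft t s) t)
    (hds : ∀ t s, HasDerivAt (fun s' => f t s') (fs t s) s)
    (hfpert : ∀ t s : ℝ, f (t + 2 * π) s = f t s)
    (hfpers : ∀ t s : ℝ, f t (s + L) = f t s)
    (hfne : ∃ t s : ℝ, f t s ≠ 0)
    (hκc : Continuous κ) (hκ1 : ∀ s, 1 ≤ κ s) (hK : ∀ s, HasDerivAt K (κ s) s)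
    (hKL : ∀ s, K (s + L) = K s + Θ)
    (heq : (∫ t in (0:ℝ)..(2 * π), ∫ s in (0:ℝ)..L,
        ((1 + A^2 / L^2) * (ft t s)^2 + 4 * (fs t s)^2
          + (4 * A / L) * (ft t s) * (fs t s) + κ s ^2 * (f t s)^2))
      = (4 * π^2 / L^2) * ∫ t in (0:ℝ)..(2 * π), ∫ s in (0:ℝ)..L, (f t s)^2) : False := by
  have h2π : (0:ℝ) < 2 * π := by positivity
  have cf : Continuous fun p : ℝ × ℝ => f p.1 p.2 := hf
  have cft : Continuous fun p : ℝ × ℝ => ft p.1 p.2 := hft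
  have cfs : Continuous fun p : ℝ × ℝ => fs p.1 p.2 := hfs
  have cf' : Continuous fun p : ℝ × ℝ => f p.2 p.1 := cf.comp continuous_swap
  have cft' : Continuous fun p : ℝ × ℝ => ft p.2 p.1 := cft.comp continuous_swap
  have cfs' : Continuous fun p : ℝ × ℝ => fs p.2 p.1 := cfs.comp continuous_swap
  have df : ∀ s, Continuous fun t => f t s := fun s => cf.comp (by fun_prop : Continuous fun t : ℝ => (t, s))
  have dft : ∀ s, Continuous fun t => ft t s := fun s => cft.comp (by fun_prop : Continuous fun t : ℝ => (t, s))
  have dfs : ∀ s, Continuous fun t => fs t s := fun s => cfs.comp (by fun_prop : Continuous fun t : ℝ => (t, s))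
  have ef : ∀ t, Continuous fun s => f t s := fun t => cf.comp (by fun_prop : Continuous fun s : ℝ => (t, s))
  have efs : ∀ t, Continuous fun s => fs t s := fun t => cfs.comp (by fun_prop : Continuous fun s : ℝ => (t, s))
  obtain ⟨B, hB⟩ : ∃ B, B = A / (2 * L) := ⟨_, rfl⟩
  obtain ⟨P, hPdef⟩ : ∃ P : ℝ → ℝ, P = fun s => ∫ t in (0:ℝ)..(2 * π), f t s ^ 2 := ⟨_, rfl⟩
  obtain ⟨Q, hQdef⟩ : ∃ Q : ℝ → ℝ, Q = fun s => ∫ t in (0:ℝ)..(2 * π), 2 * f t s * fs t s :=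
    ⟨_, rfl⟩
  obtain ⟨M, hMdef⟩ : ∃ M : ℝ → ℝ, M = fun s => ∫ t in (0:ℝ)..(2 * π), (B * ft t s + fs t s) ^ 2 :=
    ⟨_, rfl⟩
  obtain ⟨N, hNdef⟩ : ∃ N : ℝ → ℝ, N = fun s => ∫ t in (0:ℝ)..(2 * π), ft t s ^ 2 := ⟨_, rfl⟩
  have hQc : Continuous Q := by
    rw [hQdef]
    exact intervalIntegral.continuous_parametric_intervalIntegral_of_continuous'
      (f := fun s t => 2 * f t s * fs t s)
      (by unfold Function.uncurry; fun_prop) _ _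
  have hMc : Continuous M := by
    rw [hMdef]
    exact intervalIntegral.continuous_parametric_intervalIntegral_of_continuous'
      (f := fun s t => (B * ft t s + fs t s) ^ 2)
      (by unfold Function.uncurry; fun_prop) _ _
  have hNc : Continuous N := by
    rw [hNdef]
    exact intervalIntegral.continuous_parametric_intervalIntegral_of_continuous'
      (f := fun s t => ft t s ^ 2)
      (by unfold Function.uncurry; fun_prop) _ _
  have hP0 : ∀ s, 0 ≤ P s := fun s => by
    rw [hPdef]; exact intervalIntegral.integral_nonneg h2π.le (fun t _ => sq_nonneg _)
  have hN0 : ∀ s, 0 ≤ N s := fun s => by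
    rw [hNdef]; exact intervalIntegral.integral_nonneg h2π.le (fun t _ => sq_nonneg _)
  have hPL : ∀ s, P (s + L) = P s := fun s => by rw [hPdef]; simp only [hfpers]
  have hP : ∀ s, HasDerivAt P (Q s) s := by
    have e : P = fun s => P 0 + ∫ u in (0:ℝ)..s, Q u := by
      funext s
      have e1 : ∫ u in (0:ℝ)..s, Q u
          = ∫ t in (0:ℝ)..(2 * π), ∫ u in (0:ℝ)..s, 2 * f t u * fs t u := by
        rw [hQdef]
        exact swap_cont (fun u t => 2 * f t u * fs t u) (by unfold Function.uncurry; fun_prop)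
          0 s 0 (2 * π) h2π.le
      have e2 : ∀ t, ∫ u in (0:ℝ)..s, 2 * f t u * fs t u = f t s ^ 2 - f t 0 ^ 2 := by
        intro t
        have := ef t
        have := efs t
        rw [intervalIntegral.integral_eq_sub_of_hasDerivAt (f := fun u => f t u ^ 2)]
        · intro u _
          refine ((hds t u).pow 2).congr_deriv ?_
          simp
        · exact Continuous.intervalIntegrable (by fun_prop) _ _
      rw [e1]
      simp only [e2]
      rw [hPdef, intervalIntegral.integral_sub]
      · ring
      all_goals exact Continuous.intervalIntegrable ((df _).pow 2) _ _
    intro s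
    rw [e]
    exact ((hQc.integral_hasStrictDerivAt 0 s).hasDerivAt).const_add _
  have hPc : Continuous P := continuous_iff_continuousAt.2 fun s => (hP s).continuousAt
  have hfft : ∀ s, ∫ t in (0:ℝ)..(2 * π), 2 * f t s * ft t s = 0 := by
    intro s
    have := df s
    have := dft s
    rw [intervalIntegral.integral_eq_sub_of_hasDerivAt (f := fun t => f t s ^ 2)]
    · have := hfpert 0 s
      rw [zero_add] at this
      rw [this]; ring
    · intro t _
      refine ((hdt t s).pow 2).congr_deriv ?_
      simp
    · exact Continuous.intervalIntegrable (by fun_prop) _ _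
  have hq : ∀ s l : ℝ, 0 ≤ M s - l * Q s + l ^ 2 * P s := by
    intro s l
    have := df s
    have := dft s
    have := dfs s
    have h := intervalIntegral.integral_nonneg (μ := volume) (f := fun t => (B * ft t s + fs t s - l * f t s) ^ 2)
      h2π.le (fun t _ => sq_nonneg _)
    have e : ∀ t, (B * ft t s + fs t s - l * f t s) ^ 2 = (B * ft t s + fs t s) ^ 2
        - (l * B) * (2 * f t s * ft t s) - l * (2 * f t s * fs t s) + l ^ 2 * f t s ^ 2 :=
      fun t => by ring
    simp only [e] at h
    rw [intervalIntegral.integral_add, intervalIntegral.integral_sub,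
      intervalIntegral.integral_sub, intervalIntegral.integral_const_mul,
      intervalIntegral.integral_const_mul, intervalIntegral.integral_const_mul, hfft] at h
    · rw [hMdef, hQdef, hPdef]
      simp only
      linarith
    all_goals exact Continuous.intervalIntegrable (by fun_prop) _ _
  have main := sqrt_ineq L hL P Q M κ K Θ hΘ hP hQc hMc hP0 hPL hκc hK hKL hq
  rw [swap_cont _ (by unfold Function.uncurry; fun_prop) _ _ _ _ hL.le,
    swap_cont (fun t s => f t s ^ 2) (by unfold Function.uncurry; fun_prop) _ _ _ _ hL.le] at heq
  have e : ∀ s, ∫ t in (0:ℝ)..(2 * π), ((1 + A^2 / L^2) * (ft t s)^2 + 4 * (fs t s)^2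
          + (4 * A / L) * (ft t s) * (fs t s) + κ s ^2 * (f t s)^2)
      = N s + 4 * M s + κ s ^ 2 * P s := by
    intro s
    have := df s
    have := dft s
    have := dfs s
    have e : ∀ t, (1 + A^2 / L^2) * (ft t s)^2 + 4 * (fs t s)^2
          + (4 * A / L) * (ft t s) * (fs t s) + κ s ^2 * (f t s)^2
        = ft t s ^ 2 + 4 * (B * ft t s + fs t s) ^ 2 + κ s ^ 2 * f t s ^ 2 := by
      intro t
      rw [hB]
      field_simp
      ring
    simp only [e]
    rw [intervalIntegral.integral_add, intervalIntegral.integral_add,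
      intervalIntegral.integral_const_mul, intervalIntegral.integral_const_mul, hMdef, hNdef, hPdef]
    all_goals exact Continuous.intervalIntegrable (by fun_prop) _ _
  simp only [e] at heq
  have heP : ∀ s, ∫ t in (0:ℝ)..(2 * π), f t s ^ 2 = P s := fun s => by rw [hPdef]
  simp only [heP] at heq
  have hΘ0 : 0 < Θ := by linarith
  have hc1 : (2 * π / Θ) ^ 2 < 1 := by
    have h1 : 2 * π / Θ < 1 := by rwa [div_lt_one hΘ0]
    have h0 : 0 < 2 * π / Θ := by positivity
    nlinarith
  set c := 2 * π / Θ
  have hmono : ∫ s in (0:ℝ)..L, ((4 * M s + c ^ 2 * κ s ^ 2 * P s) + (1 - c ^ 2) * P s)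
      ≤ ∫ s in (0:ℝ)..L, (N s + 4 * M s + κ s ^ 2 * P s) := by
    refine intervalIntegral.integral_mono_on hL.le ?_ ?_ ?_
    · exact Continuous.intervalIntegrable (by fun_prop) _ _
    · exact Continuous.intervalIntegrable (by fun_prop) _ _
    · intro s _
      have h1 : 0 ≤ (1 - c ^ 2) * (κ s ^ 2 - 1) * P s :=
        mul_nonneg (mul_nonneg (by linarith) (by nlinarith [hκ1 s])) (hP0 s)
      nlinarith [hN0 s]
  rw [intervalIntegral.integral_add, intervalIntegral.integral_const_mul, heq] at hmono
  · have e5 : 4 * (π / L) ^ 2 = 4 * π ^ 2 / L ^ 2 := by ring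
    rw [e5] at main
    have hle : ∫ s in (0:ℝ)..L, P s ≤ 0 := by nlinarith
    obtain ⟨t₀, s₀, h0⟩ := hfne
    have pt : Function.Periodic (fun t => f t s₀ ^ 2) (2 * π) := fun t => by simp only [hfpert]
    have hPs : 0 < P s₀ := by
      have e6 : P s₀ = ∫ t in t₀..(t₀ + 2 * π), f t s₀ ^ 2 := by
        rw [pt.intervalIntegral_add_eq t₀ 0, hPdef, zero_add]
      rw [e6]
      exact intervalIntegral.integral_pos (by linarith) ((df s₀).pow 2).continuousOn
        (fun _ _ => sq_nonneg _) ⟨t₀, ⟨le_rfl, by linarith⟩, by positivity⟩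
    have pP : Function.Periodic P L := hPL
    have : 0 < ∫ s in s₀..(s₀ + L), P s :=
      intervalIntegral.integral_pos (by linarith) hPc.continuousOn
        (fun s _ => hP0 s) ⟨s₀, ⟨le_rfl, by linarith⟩, hPs⟩
    rw [pP.intervalIntegral_add_eq s₀ 0, zero_add] at this
    linarith
  all_goals exact Continuous.intervalIntegrable (by fun_prop) _ _

/-- **Equality case of Theorem 2.** If a simple closed spherical curve bounding a region of
area `A` admits a nonzero smooth doubly periodic function `f` attaining equality in the
lower bound `4π²/L² ≤ μ₁(P_{A,L})` for the two-dimensional periodic Schrödinger operator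
`P_{A,L}`, then the curvature `κ(s) = ‖γ''(s)‖` is constant. -/
theorem schroedinger_equality_hopf_torus_implies_constant_curvature
    (L : ℝ) (hL : 0 < L) (γ : ℝ → EuclideanSpace ℝ (Fin 3))
    (hγ : ContDiff ℝ (⊤ : ℕ∞) γ)
    (hper : ∀ s : ℝ, γ (s + L) = γ s)
    (hunit : ∀ s : ℝ, ‖deriv γ s‖ = 1)
    (hsph : ∀ s : ℝ, ‖γ s‖ = 1)
    (hsimple : Set.InjOn γ (Set.Ico 0 L))
    (x : EuclideanSpace ℝ (Fin 3))
    (hx : x ∈ Metric.sphere (0 : EuclideanSpace ℝ (Fin 3)) 1 \ Set.range γ)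
    (A : ℝ)
    (hA : A = (μH[2]
      (connectedComponentIn (Metric.sphere (0 : EuclideanSpace ℝ (Fin 3)) 1 \ Set.range γ) x)).toReal)
    (f : ℝ → ℝ → ℝ) (hf : ContDiff ℝ (⊤ : ℕ∞) (Function.uncurry f))
    (hfpert : ∀ t s : ℝ, f (t + 2 * π) s = f t s)
    (hfpers : ∀ t s : ℝ, f t (s + L) = f t s)
    (hfne : ∃ t s : ℝ, f t s ≠ 0)
    (heq : (∫ t in (0:ℝ)..(2 * π), ∫ s in (0:ℝ)..L,
        ((1 + A^2 / L^2) * (deriv (fun t' => f t' s) t)^2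
          + 4 * (deriv (fun s' => f t s') s)^2
          + (4 * A / L) * (deriv (fun t' => f t' s) t) * (deriv (fun s' => f t s') s)
          + ‖deriv (deriv γ) s‖^2 * (f t s)^2))
      = (4 * π^2 / L^2) * ∫ t in (0:ℝ)..(2 * π), ∫ s in (0:ℝ)..L, (f t s)^2) :
    ∀ s₁ s₂ : ℝ, ‖deriv (deriv γ) s₁‖ = ‖deriv (deriv γ) s₂‖ := by
  have hd : ∀ s, HasDerivAt γ (deriv γ s) s := fun s =>
    (hγ.differentiable (by simp)).differentiableAt.hasDerivAt
  have hγ' : ContDiff ℝ (⊤ : ℕ∞) (deriv γ) := by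
    have : ContDiff ℝ ((⊤ : ℕ∞) + 1) γ := by simpa using hγ
    exact (contDiff_succ_iff_deriv.1 this).2.2
  have hγ'' : ContDiff ℝ (⊤ : ℕ∞) (deriv (deriv γ)) := by
    have : ContDiff ℝ ((⊤ : ℕ∞) + 1) (deriv γ) := by simpa using hγ'
    exact (contDiff_succ_iff_deriv.1 this).2.2
  have hd' : ∀ s, HasDerivAt (deriv γ) (deriv (deriv γ) s) s := fun s =>
    (hγ'.differentiable (by simp)).differentiableAt.hasDerivAt
  obtain ⟨κ, hκ⟩ : ∃ κ : ℝ → ℝ, ∀ s, κ s = ‖deriv (deriv γ) s‖ := ⟨_, fun _ => rfl⟩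
  have hκc : Continuous κ := by
    have : κ = fun s => ‖deriv (deriv γ) s‖ := funext hκ
    rw [this]; exact hγ''.continuous.norm
  have horth : ∀ s, inner ℝ (deriv γ s) (deriv (deriv γ) s) = 0 := by
    intro s
    have e1 := (hd' s).inner ℝ (hd' s)
    have e2 : (fun t => inner ℝ (deriv γ t) (deriv γ t)) = fun _ => (1:ℝ) := by
      funext t; rw [real_inner_self_eq_norm_sq, hunit]; norm_num
    rw [e2] at e1
    have := e1.unique (hasDerivAt_const s (1:ℝ))
    linarith [this, real_inner_comm (deriv γ s) (deriv (deriv γ) s)]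
  have hγT : ∀ s, inner ℝ (γ s) (deriv γ s) = 0 := by
    intro s
    have e1 := (hd s).inner ℝ (hd s)
    have e2 : (fun t => inner ℝ (γ t) (γ t)) = fun _ => (1:ℝ) := by
      funext t; rw [real_inner_self_eq_norm_sq, hsph]; norm_num
    rw [e2] at e1
    have := e1.unique (hasDerivAt_const s (1:ℝ))
    linarith [this, real_inner_comm (γ s) (deriv γ s)]
  have hγT' : ∀ s, inner ℝ (γ s) (deriv (deriv γ) s) = -1 := by
    intro s
    have e1 := (hd s).inner ℝ (hd' s)
    have e2 : (fun t => inner ℝ (γ t) (deriv γ t)) = fun _ => (0:ℝ) := funext hγT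
    rw [e2] at e1
    have := e1.unique (hasDerivAt_const s (0:ℝ))
    rw [real_inner_self_eq_norm_sq, hunit] at this
    linarith
  have hκ1 : ∀ s, 1 ≤ κ s := by
    intro s
    have := abs_real_inner_le_norm (γ s) (deriv (deriv γ) s)
    rw [hγT', hsph, one_mul, ← hκ] at this
    simpa using this
  have hperT : ∀ s, deriv γ (s + L) = deriv γ s := by
    intro s
    have e1 : HasDerivAt (fun s => γ (s + L)) (deriv γ (s + L)) s := (hd (s + L)).comp_add_const s L
    rw [funext hper] at e1
    exact e1.unique (hd s)
  have hperT' : ∀ s, deriv (deriv γ) (s + L) = deriv (deriv γ) s := by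
    intro s
    have e1 : HasDerivAt (fun s => deriv γ (s + L)) (deriv (deriv γ) (s + L)) s :=
      (hd' (s + L)).comp_add_const s L
    rw [funext hperT] at e1
    exact e1.unique (hd' s)
  have hκp : Function.Periodic κ L := fun s => by rw [hκ, hκ, hperT']
  obtain ⟨K, hKdef⟩ : ∃ K : ℝ → ℝ, K = fun s => ∫ u in (0:ℝ)..s, κ u := ⟨_, rfl⟩
  have hK : ∀ s, HasDerivAt K (κ s) s := fun s => by
    rw [hKdef]; exact (hκc.integral_hasStrictDerivAt 0 s).hasDerivAt
  have hKL : ∀ s, K (s + L) = K s + K L := by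
    intro s
    have h1 := hκp.intervalIntegral_add_eq s 0
    rw [zero_add] at h1
    rw [hKdef]
    simp only
    rw [← h1]
    exact (intervalIntegral.integral_add_adjacent_intervals (hκc.intervalIntegrable _ _)
      (hκc.intervalIntegrable _ _)).symm
  have hK0 : K 0 = 0 := by rw [hKdef]; simp
  rcases le_or_gt (K L) (2 * π) with hle | hgt
  · have hc := fenchel_rigid L hL γ (deriv γ) (deriv (deriv γ)) κ K hd hd' hunit hκ hκ1 hκc hK
      horth hγT hγT' (by simpa using hper 0) (by simpa using hperT 0) (by rw [hK0]; linarith)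
    have hall : ∀ s, κ s = κ 0 := by
      intro s
      obtain ⟨y, hy, hxy⟩ := hκp.exists_mem_Ico₀ hL s
      rw [hxy]
      exact hc y ⟨hy.1, hy.2.le⟩
    intro s₁ s₂
    rw [← hκ, ← hκ, hall s₁, hall s₂]
  · exfalso
    have hFd : ∀ p, HasFDerivAt (Function.uncurry f) (fderiv ℝ (Function.uncurry f) p) p := fun p =>
      (hf.differentiable (by simp)).differentiableAt.hasFDerivAt
    have hFc : Continuous (fderiv ℝ (Function.uncurry f)) := hf.continuous_fderiv (by simp)
    have hdt : ∀ t s, HasDerivAt (fun t' => f t' s)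
        (fderiv ℝ (Function.uncurry f) (t, s) (1, 0)) t := by
      intro t s
      exact (hFd (t, s)).comp_hasDerivAt t ((hasDerivAt_id t).prodMk (hasDerivAt_const t s))
    have hds : ∀ t s, HasDerivAt (fun s' => f t s')
        (fderiv ℝ (Function.uncurry f) (t, s) (0, 1)) s := by
      intro t s
      exact (hFd (t, s)).comp_hasDerivAt s ((hasDerivAt_const s t).prodMk (hasDerivAt_id s))
    simp only [fun t s => (hdt t s).deriv, fun t s => (hds t s).deriv, ← hκ] at heq
    refine energy_contra L hL A f (fun t s => fderiv ℝ (Function.uncurry f) (t, s) (1, 0))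
      (fun t s => fderiv ℝ (Function.uncurry f) (t, s) (0, 1)) κ K (K L) hgt hf.continuous ?_ ?_
      hdt hds hfpert hfpers hfne hκc hκ1 hK hKL heq
    · exact hFc.clm_apply continuous_const
    · exact hFc.clm_apply continuous_const
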